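/- arXiv:2407.03777 — 3 statements merged into one kernel-verified Lean document; each statement's English description precedes it below -/
import Mathlib

section
/- For every choice of constants α > 0, T > 0 and C₁ > 0 there exists a constant C > 0 with the following property. For every abstract FEM setting (H, V, ‖·‖_h, a_h) with ellipticity constant α, every h > 0, every linear map E : V → H with ‖E v‖ ≤ C₁ h² ‖v‖_h for all v ∈ V, every continuously differentiable g : [0,T] → H, every twice continuously differentiable ρ : [0,T] → H, and every twice continuously differentiable θ : [0,T] → V with θ(0) = 0, θ'(0) = 0 and (θ''(t), v) + a_h(θ(t), v) = (g(t), E v) − (ρ''(t), v) for all v ∈ V and t ∈ [0,T], one has for every τ ∈ [0,T]: ‖θ(τ)‖² ≤ C ( h⁴ ( sup_{s ∈ [0,T]} ‖g(s)‖² + ∫₀ᵀ ‖g'(s)‖² ds ) + ‖ρ'(0)‖² + ∫₀ᵀ ‖ρ'(s)‖² ds + ∫₀ᵀ ‖ρ''(s)‖² ds ). -/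
open scoped RealInnerProductSpace

theorem aux_completion {X : Type} [AddCommGroup X] [Module ℝ X] (c : InnerProductSpace.Core ℝ X) :
    ∃ (W : Type) (_ : NormedAddCommGroup W) (_ : InnerProductSpace ℝ W) (_ : CompleteSpace W)
      (ι : X →ₗ[ℝ] W), DenseRange ι ∧ ∀ x y, ⟪ι x, ι y⟫ = c.inner x y := by
  let _ : NormedAddCommGroup X := c.toNormedAddCommGroup
  let _ : InnerProductSpace ℝ X := InnerProductSpace.ofCore c.toCore
  refine ⟨UniformSpace.Completion X, inferInstance, inferInstance, inferInstance,
    (UniformSpace.Completion.toComplL (𝕜 := ℝ) (E := X)).toLinearMap, ?_, ?_⟩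
  · exact UniformSpace.Completion.denseRange_coe
  · intro x y
    exact UniformSpace.Completion.inner_coe x y

theorem aux_cs (T : ℝ) (hT : 0 < T) (f : ℝ → ℝ) (hf : ContinuousOn f (Set.Icc 0 T)) :
    (∫ s in (0:ℝ)..T, f s) ^ 2 ≤ T * ∫ s in (0:ℝ)..T, f s ^ 2 := by
  have hu : Set.uIcc 0 T = Set.Icc 0 T := Set.uIcc_of_le hT.le
  have i1 : IntervalIntegrable f MeasureTheory.volume 0 T :=
    ContinuousOn.intervalIntegrable (by rwa [hu])
  have i2 : IntervalIntegrable (fun s => f s ^ 2) MeasureTheory.volume 0 T :=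
    ContinuousOn.intervalIntegrable (by rw [hu]; exact hf.pow 2)
  set R := ∫ s in (0:ℝ)..T, f s with hR
  have h0 : 0 ≤ ∫ s in (0:ℝ)..T, (f s - R / T) ^ 2 :=
    intervalIntegral.integral_nonneg hT.le (fun s _ => sq_nonneg _)
  have h1 : ∫ s in (0:ℝ)..T, (f s - R / T) ^ 2
      = (∫ s in (0:ℝ)..T, f s ^ 2) - 2 * (R / T) * R + T * (R / T) ^ 2 := by
    have : ∀ s, (f s - R / T) ^ 2 = (f s ^ 2 - 2 * (R / T) * f s) + (R / T) ^ 2 := by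
      intro s; ring
    simp_rw [this]
    rw [intervalIntegral.integral_add (i2.sub (i1.const_mul _)) (by simp),
      intervalIntegral.integral_sub i2 (i1.const_mul _), intervalIntegral.integral_const_mul]
    simp [← hR]
  rw [h1] at h0
  have : T * ((∫ s in (0:ℝ)..T, f s ^ 2) - 2 * (R / T) * R + T * (R / T) ^ 2)
      = T * (∫ s in (0:ℝ)..T, f s ^ 2) - R ^ 2 := by
    field_simp; ring
  nlinarith [mul_nonneg hT.le h0]

theorem aux_main {H W : Type} [NormedAddCommGroup H] [InnerProductSpace ℝ H] [CompleteSpace H]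
    [NormedAddCommGroup W] [InnerProductSpace ℝ W] [CompleteSpace W]
    (T c G : ℝ) (hT : 0 < T) (hc : 0 ≤ c)
    (j E : W →L[ℝ] H)
    (hE : ∀ w, ‖E w‖ ^ 2 ≤ c ^ 2 * (‖w‖ ^ 2 - ‖j w‖ ^ 2))
    (hj : ∀ w, ‖j w‖ ≤ ‖w‖)
    (g r u u' u'' : ℝ → H) (θ : ℝ → W)
    (hg : ContinuousOn g (Set.Icc 0 T)) (hr : ContinuousOn r (Set.Icc 0 T))
    (hG : ∀ t ∈ Set.Icc 0 T, ‖g t‖ ≤ G)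
    (hu : ∀ t ∈ Set.Icc (0 : ℝ) T, HasDerivWithinAt u (u' t) (Set.Icc (0 : ℝ) T) t)
    (hu' : ∀ t ∈ Set.Icc (0 : ℝ) T, HasDerivWithinAt u' (u'' t) (Set.Icc (0 : ℝ) T) t)
    (hu'' : ContinuousOn u'' (Set.Icc 0 T))
    (u0 : u 0 = 0) (u0' : u' 0 = 0) (hθ : ∀ t, j (θ t) = u t)
    (heq : ∀ t ∈ Set.Icc (0 : ℝ) T, ∀ w, ⟪u'' t, j w⟫ + ⟪θ t, w⟫ - ⟪u t, j w⟫
      = ⟪g t, E w⟫ - ⟪r t, j w⟫) :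
    ∀ τ ∈ Set.Icc (0 : ℝ) T, ‖u τ‖ ≤ 4 * T * c * G + 2 * T * ∫ s in (0:ℝ)..T, ‖r s‖ := by
  have hG0 : 0 ≤ G := (norm_nonneg _).trans (hG 0 ⟨le_rfl, hT.le⟩)
  have huc : ContinuousOn u (Set.Icc 0 T) := fun t ht => (hu t ht).continuousWithinAt
  have huc' : ContinuousOn u' (Set.Icc 0 T) := fun t ht => (hu' t ht).continuousWithinAt
  have hEc : ∀ w, ‖E w‖ ≤ c * ‖w‖ := by
    intro w
    refine (abs_le_of_sq_le_sq' ?_ (by positivity)).2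
    have := hE w
    nlinarith [mul_nonneg (sq_nonneg c) (sq_nonneg ‖j w‖)]
  -- continuity of θ
  have hθc : ContinuousOn θ (Set.Icc 0 T) := by
    intro s hs
    rw [ContinuousWithinAt, tendsto_iff_norm_sub_tendsto_zero]
    have key : ∀ t ∈ Set.Icc 0 T, ‖θ t - θ s‖ ≤
        ‖u t - u s‖ + c * ‖g t - g s‖ + ‖r t - r s‖ + ‖u'' t - u'' s‖ := by
      intro t ht
      set d := θ t - θ s with hd
      have e1 := heq t ht d
      have e2 := heq s hs d
      have e3 : ⟪θ t, d⟫ - ⟪θ s, d⟫ = ‖d‖ ^ 2 := by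
        rw [← inner_sub_left, ← hd, real_inner_self_eq_norm_sq]
      have e4 : ‖d‖ ^ 2 = ⟪u t - u s, j d⟫ + ⟪g t - g s, E d⟫ - ⟪r t - r s, j d⟫
          - ⟪u'' t - u'' s, j d⟫ := by
        simp only [inner_sub_left]; linarith
      have b1 : ∀ x : H, |⟪x, j d⟫| ≤ ‖x‖ * ‖d‖ := fun x =>
        (abs_real_inner_le_norm _ _).trans (by gcongr; exact hj d)
      have b2 : |⟪g t - g s, E d⟫| ≤ ‖g t - g s‖ * (c * ‖d‖) :=
        (abs_real_inner_le_norm _ _).trans (by gcongr; exact hEc d)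
      have a1 := abs_le.1 (b1 (u t - u s))
      have a2 := abs_le.1 (b1 (r t - r s))
      have a3 := abs_le.1 (b1 (u'' t - u'' s))
      have a4 := abs_le.1 b2
      rcases (norm_nonneg d).eq_or_lt with h0 | h0
      · rw [← h0]; positivity
      · refine le_of_mul_le_mul_right ?_ h0
        nlinarith
    have lim : Filter.Tendsto (fun t => ‖u t - u s‖ + c * ‖g t - g s‖ + ‖r t - r s‖
        + ‖u'' t - u'' s‖) (nhdsWithin s (Set.Icc 0 T)) (nhds 0) := by
      have q1 := tendsto_iff_norm_sub_tendsto_zero.1 (huc s hs)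
      have q2 := tendsto_iff_norm_sub_tendsto_zero.1 (hg s hs)
      have q3 := tendsto_iff_norm_sub_tendsto_zero.1 (hr s hs)
      have q4 := tendsto_iff_norm_sub_tendsto_zero.1 (hu'' s hs)
      simpa using ((q1.add (q2.const_mul c)).add q3).add q4
    refine squeeze_zero' (Filter.Eventually.of_forall fun _ => norm_nonneg _) ?_ lim
    filter_upwards [self_mem_nhdsWithin] with t ht using key t ht
  -- primitive
  obtain ⟨Φ, hΦ0, hΦ⟩ : ∃ Φ : ℝ → W, Φ 0 = 0 ∧ ∀ t ∈ Set.Icc (0:ℝ) T,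
      HasDerivAt Φ (θ t) t := by
    have hcont : Continuous (Set.IccExtend hT.le (Set.domRestrict (Set.Icc 0 T) θ)) :=
      (continuousOn_iff_continuous_domRestrict.1 hθc).Icc_extend'
    refine ⟨fun t => ∫ s in (0:ℝ)..t, Set.IccExtend hT.le (Set.domRestrict (Set.Icc 0 T) θ) s,
      by simp, ?_⟩
    intro t ht
    have := hcont.integral_hasStrictDerivAt 0 t
    rw [Set.IccExtend_of_mem _ _ ht] at this
    exact this.hasDerivAt
  have hΦc : ContinuousOn Φ (Set.Icc 0 T) := fun t ht => (hΦ t ht).continuousAt.continuousWithinAt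
  have hjΦ : ∀ t ∈ Set.Icc (0:ℝ) T, HasDerivAt (fun t => j (Φ t)) (u t) t := by
    intro t ht
    have := j.hasFDerivAt.comp_hasDerivAt t (hΦ t ht)
    rw [hθ] at this
    exact this
  have hA : ∀ w, 0 ≤ ‖w‖ ^ 2 - ‖j w‖ ^ 2 := by
    intro w
    have := pow_le_pow_left₀ (norm_nonneg _) (hj w) 2
    linarith
  set Y : ℝ → ℝ := fun t => ‖u t‖ ^ 2 + (‖Φ t‖ ^ 2 - ‖j (Φ t)‖ ^ 2) with hY
  have hYc : ContinuousOn Y (Set.Icc 0 T) :=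
    (huc.norm.pow 2).add ((hΦc.norm.pow 2).sub ((j.continuous.comp_continuousOn hΦc).norm.pow 2))
  obtain ⟨τ, hτ, hmax⟩ := isCompact_Icc.exists_isMaxOn ⟨0, le_rfl, hT.le⟩ hYc
  have hY0 : ∀ t, 0 ≤ Y t := fun t => add_nonneg (sq_nonneg _) (hA _)
  set S := √(Y τ) with hS
  have hS0 : 0 ≤ S := Real.sqrt_nonneg _
  have hS2 : S ^ 2 = Y τ := Real.sq_sqrt (hY0 τ)
  have huS : ∀ t ∈ Set.Icc (0:ℝ) T, ‖u t‖ ≤ S := by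
    intro t ht
    refine (abs_le_of_sq_le_sq' ?_ hS0).2
    have h1 : Y t ≤ Y τ := hmax ht
    have h2 := hA (Φ t)
    rw [hS2]; simp only [hY] at h1 ⊢; linarith
  have hES : ∀ t ∈ Set.Icc (0:ℝ) T, ‖E (Φ t)‖ ≤ c * S := by
    intro t ht
    refine (abs_le_of_sq_le_sq' ?_ (by positivity)).2
    have h1 : Y t ≤ Y τ := hmax ht
    have h2 := hE (Φ t)
    rw [mul_pow, hS2]
    refine h2.trans (mul_le_mul_of_nonneg_left ?_ (sq_nonneg c))
    have := sq_nonneg ‖u t‖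
    simp only [hY] at h1 ⊢; linarith
  have hjS : ∀ t ∈ Set.Icc (0:ℝ) T, ‖j (Φ τ - Φ t)‖ ≤ T * S := by
    intro t ht
    rw [map_sub]
    have := (convex_Icc (0:ℝ) T).norm_image_sub_le_of_norm_hasDerivWithin_le
      (fun x hx => (hjΦ x hx).hasDerivWithinAt) huS ht hτ
    refine this.trans ?_
    rw [mul_comm]
    gcongr
    rw [Real.norm_eq_abs, abs_le]
    constructor <;> linarith [ht.1, ht.2, hτ.1, hτ.2]
  have hsub : Set.Icc 0 τ ⊆ Set.Icc 0 T := Set.Icc_subset_Icc_right hτ.2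
  set P : ℝ → ℝ := fun t => ⟪u' t, j (Φ τ - Φ t)⟫ + ‖u t‖ ^ 2 / 2
    - (‖Φ τ - Φ t‖ ^ 2 - ‖j (Φ τ - Φ t)‖ ^ 2) / 2 with hP
  set p : ℝ → ℝ := fun t => ⟪g t, E (Φ τ - Φ t)⟫ - ⟪r t, j (Φ τ - Φ t)⟫ with hp
  have hΘc : ContinuousOn (fun t => Φ τ - Φ t) (Set.Icc 0 T) := continuousOn_const.sub hΦc
  have hjΘc := j.continuous.comp_continuousOn hΘc
  have hEΘc := E.continuous.comp_continuousOn hΘc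
  have hPc : ContinuousOn P (Set.Icc 0 T) :=
    ((huc'.inner hjΘc).add ((huc.norm.pow 2).div_const 2)).sub
      (((hΘc.norm.pow 2).sub (hjΘc.norm.pow 2)).div_const 2)
  have hpc : ContinuousOn p (Set.Icc 0 T) := (hg.inner hEΘc).sub (hr.inner hjΘc)
  have hPd : ∀ t ∈ Set.Ioo 0 τ, HasDerivAt P (p t) t := by
    intro t ht
    have htT : t ∈ Set.Icc 0 T := ⟨ht.1.le, ht.2.le.trans hτ.2⟩
    have hn : Set.Icc 0 T ∈ nhds t := Icc_mem_nhds ht.1 (ht.2.trans_le hτ.2)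
    have d1 := (hu t htT).hasDerivAt hn
    have d2 := (hu' t htT).hasDerivAt hn
    have d3 : HasDerivAt (fun t => Φ τ - Φ t) (-θ t) t := (hΦ t htT).const_sub _
    have d4 : HasDerivAt (fun t => j (Φ τ - Φ t)) (-u t) t := by
      have := (hjΦ t htT).const_sub (j (Φ τ))
      simpa only [map_sub] using this
    have := ((d2.inner ℝ d4).add (d1.norm_sq.div_const 2)).sub
      ((d3.norm_sq.sub d4.norm_sq).div_const 2)
    refine this.congr_deriv ?_
    have e := heq t htT (Φ τ - Φ t)
    simp only [inner_neg_right, hp]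
    rw [← e, real_inner_comm (u t) (u' t), real_inner_comm (θ t), real_inner_comm (u t) (j _)]
    ring
  have hftc := intervalIntegral.integral_eq_sub_of_hasDerivAt_of_le hτ.1 (hPc.mono hsub) hPd
    (ContinuousOn.intervalIntegrable (by rw [Set.uIcc_of_le hτ.1]; exact hpc.mono hsub))
  have hend : P τ - P 0 = S ^ 2 / 2 := by
    rw [hS2]; simp [hP, hY, u0, u0', hΦ0]; ring
  have hrint : IntervalIntegrable (fun s => ‖r s‖) MeasureTheory.volume 0 T :=
    ContinuousOn.intervalIntegrable (by rw [Set.uIcc_of_le hT.le]; exact hr.norm)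
  set R := ∫ s in (0:ℝ)..T, ‖r s‖ with hR
  have hbound : ∫ t in (0:ℝ)..τ, p t ≤ T * (2 * c * G * S) + T * S * R := by
    have h1 : ∫ t in (0:ℝ)..τ, p t ≤ ∫ t in (0:ℝ)..τ, (2 * c * G * S + T * S * ‖r t‖) := by
      refine intervalIntegral.integral_mono_on hτ.1
        (ContinuousOn.intervalIntegrable (by rw [Set.uIcc_of_le hτ.1]; exact hpc.mono hsub))
        (ContinuousOn.intervalIntegrable (by
          rw [Set.uIcc_of_le hτ.1]
          exact continuousOn_const.add (continuousOn_const.mul (hr.mono hsub).norm))) ?_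
      intro t ht
      have htT := hsub ht
      have b1 : ⟪g t, E (Φ τ - Φ t)⟫ ≤ G * (c * S + c * S) := by
        refine (real_inner_le_norm _ _).trans ?_
        have : ‖E (Φ τ - Φ t)‖ ≤ c * S + c * S := by
          rw [map_sub]
          exact (norm_sub_le _ _).trans (add_le_add (hES τ hτ) (hES t htT))
        exact mul_le_mul (hG t htT) this (norm_nonneg _) hG0
      have b2 : |⟪r t, j (Φ τ - Φ t)⟫| ≤ ‖r t‖ * (T * S) :=
        (abs_real_inner_le_norm _ _).trans (by gcongr; exact hjS t htT)
      have := (abs_le.1 b2).1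
      simp only [hp]; linarith
    refine h1.trans ?_
    have h2 : ∫ t in (0:ℝ)..τ, (2 * c * G * S + T * S * ‖r t‖)
        ≤ ∫ t in (0:ℝ)..T, (2 * c * G * S + T * S * ‖r t‖) := by
      refine intervalIntegral.integral_mono_interval le_rfl hτ.1 hτ.2 ?_
        (IntervalIntegrable.add (by simp) (hrint.const_mul (T * S)))
      exact Filter.Eventually.of_forall fun t => by simp only [Pi.zero_apply]; positivity
    refine h2.trans (le_of_eq ?_)
    rw [intervalIntegral.integral_add (by simp) (hrint.const_mul _),
      intervalIntegral.integral_const_mul]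
    simp only [intervalIntegral.integral_const, smul_eq_mul, intervalIntegral.integral_const_mul,
      ← hR]
    ring
  have hR0 : 0 ≤ R := intervalIntegral.integral_nonneg hT.le fun _ _ => norm_nonneg _
  have hfin : S ≤ 4 * T * c * G + 2 * T * R := by
    rcases hS0.eq_or_lt with h0 | h0
    · rw [← h0]; positivity
    · refine le_of_mul_le_mul_right ?_ h0
      rw [hftc, hend] at hbound
      nlinarith
  exact fun t ht => (huS t ht).trans hfin

theorem aux_space {H : Type} [NormedAddCommGroup H] [InnerProductSpace ℝ H]
    (V : Submodule ℝ H) (a : V →ₗ[ℝ] V →ₗ[ℝ] ℝ) (hs : ∀ w v : V, a w v = a v w)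
    (hp : ∀ w : V, 0 ≤ a w w) :
    ∃ (W : Type) (_ : NormedAddCommGroup W) (_ : InnerProductSpace ℝ W) (_ : CompleteSpace W)
      (ι : V →ₗ[ℝ] W), DenseRange ι ∧ ∀ x y : V, ⟪ι x, ι y⟫ = ⟪(x : H), (y : H)⟫ + a x y :=
  aux_completion (X := V)
    { inner := fun x y : V => ⟪(x : H), (y : H)⟫ + a x y
      conj_inner_symm := by
        intro x y
        simp [real_inner_comm, hs x y]
      re_inner_nonneg := by
        intro x
        have := hp x
        have h2 : 0 ≤ ⟪(x : H), (x : H)⟫ := real_inner_self_nonneg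
        simp only [RCLike.re_to_real]
        linarith
      add_left := by
        intro x y z
        simp [inner_add_left]; ring
      smul_left := by
        intro x y r
        simp [inner_smul_left]; ring
      definite := by
        intro x hx
        have := hp x
        have h2 : 0 ≤ ⟪(x : H), (x : H)⟫ := real_inner_self_nonneg
        have h3 : ⟪(x : H), (x : H)⟫ = 0 := by linarith
        exact Subtype.ext (inner_self_eq_zero.1 h3) }

/-- L²-norm error estimate for the semidiscrete approximation. -/
theorem semidiscrete_L2_error (α T C₁ : ℝ) (hα : 0 < α) (hT : 0 < T) (hC₁ : 0 < C₁) :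
    ∃ C > 0,
      ∀ (H : Type) [NormedAddCommGroup H] [InnerProductSpace ℝ H] [CompleteSpace H]
        (V : Submodule ℝ H) (Nh : Seminorm ℝ V) (a : V →ₗ[ℝ] V →ₗ[ℝ] ℝ),
        (∀ w v : V, a w v = a v w) →
        (∀ w : V, α * Nh w ^ 2 ≤ a w w) →
        ∀ (h : ℝ), 0 < h →
          ∀ (E : V →ₗ[ℝ] H), (∀ v : V, ‖E v‖ ≤ C₁ * h ^ 2 * Nh v) →
            ∀ (g g' : ℝ → H),
              (∀ t ∈ Set.Icc (0 : ℝ) T, HasDerivWithinAt g (g' t) (Set.Icc (0 : ℝ) T) t) →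
              ContinuousOn g' (Set.Icc (0 : ℝ) T) →
              ∀ (ρ ρ' ρ'' : ℝ → H),
                (∀ t ∈ Set.Icc (0 : ℝ) T,
                  HasDerivWithinAt ρ (ρ' t) (Set.Icc (0 : ℝ) T) t) →
                (∀ t ∈ Set.Icc (0 : ℝ) T,
                  HasDerivWithinAt ρ' (ρ'' t) (Set.Icc (0 : ℝ) T) t) →
                ContinuousOn ρ'' (Set.Icc (0 : ℝ) T) →
                ∀ (θ θ' θ'' : ℝ → V),
                  (∀ t ∈ Set.Icc (0 : ℝ) T,
                    HasDerivWithinAt θ (θ' t) (Set.Icc (0 : ℝ) T) t) →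
                  (∀ t ∈ Set.Icc (0 : ℝ) T,
                    HasDerivWithinAt θ' (θ'' t) (Set.Icc (0 : ℝ) T) t) →
                  ContinuousOn θ'' (Set.Icc (0 : ℝ) T) →
                  θ 0 = 0 → θ' 0 = 0 →
                  (∀ t ∈ Set.Icc (0 : ℝ) T, ∀ v : V,
                    ⟪((θ'' t : V) : H), (v : H)⟫ + a (θ t) v
                      = ⟪g t, E v⟫ - ⟪ρ'' t, (v : H)⟫) →
                  ∀ τ ∈ Set.Icc (0 : ℝ) T,
                    ‖θ τ‖ ^ 2
                      ≤ C * (h ^ 4 * ((⨆ s : Set.Icc (0 : ℝ) T, ‖g ↑s‖ ^ 2)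
                              + ∫ s in (0 : ℝ)..T, ‖g' s‖ ^ 2)
                          + ‖ρ' 0‖ ^ 2 + (∫ s in (0 : ℝ)..T, ‖ρ' s‖ ^ 2)
                          + ∫ s in (0 : ℝ)..T, ‖ρ'' s‖ ^ 2) := by
  refine ⟨32 * T ^ 2 * C₁ ^ 2 / α + 8 * T ^ 3, by positivity, ?_⟩
  intro H _ _ _ V Nh a hs hell h hh E hE g g' hg hg' ρ ρ' ρ'' hρ hρ' hρ'' θ θ' θ'' hθ hθ' hθ''
    θ0 θ0' heq τ hτ
  have ha0 : ∀ w : V, 0 ≤ a w w := fun w => le_trans (by positivity) (hell w)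
  obtain ⟨W, _, _, _, ι, hι, hin⟩ := aux_space V a hs ha0
  have hnι : ∀ v : V, ‖ι v‖ ^ 2 = ‖(v : H)‖ ^ 2 + a v v := by
    intro v
    rw [← real_inner_self_eq_norm_sq, hin, real_inner_self_eq_norm_sq]
  set c := C₁ * h ^ 2 / √α with hc
  have hc0 : 0 ≤ c := by positivity
  have hc2 : c ^ 2 = C₁ ^ 2 * h ^ 4 / α := by
    rw [hc, div_pow, Real.sq_sqrt hα.le]; ring
  have hE2 : ∀ v : V, ‖E v‖ ^ 2 ≤ c ^ 2 * a v v := by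
    intro v
    have h1 := pow_le_pow_left₀ (norm_nonneg _) (hE v) 2
    have h2 : (C₁ * h ^ 2 * Nh v) ^ 2 = c ^ 2 * (α * Nh v ^ 2) := by
      rw [hc2]; field_simp
    rw [h2] at h1
    exact h1.trans (mul_le_mul_of_nonneg_left (hell v) (sq_nonneg c))
  have hjb : ∀ v : V, ‖V.subtype v‖ ≤ 1 * ‖ι v‖ := by
    intro v
    refine (abs_le_of_sq_le_sq' ?_ (by positivity)).2
    rw [one_mul, hnι]
    have := ha0 v
    simp only [Submodule.subtype_apply]; linarith
  have hEb : ∀ v : V, ‖E v‖ ≤ c * ‖ι v‖ := by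
    intro v
    refine (abs_le_of_sq_le_sq' ?_ (by positivity)).2
    rw [mul_pow, hnι]
    refine (hE2 v).trans (mul_le_mul_of_nonneg_left ?_ (sq_nonneg c))
    have := sq_nonneg ‖(v : H)‖
    linarith
  obtain ⟨j, hj⟩ : ∃ j : W →L[ℝ] H, ∀ v : V, j (ι v) = (v : H) :=
    ⟨V.subtype.extendOfNorm ι, fun v => LinearMap.extendOfNorm_eq hι ⟨1, hjb⟩ v⟩
  obtain ⟨F, hF⟩ : ∃ F : W →L[ℝ] H, ∀ v : V, F (ι v) = E v :=
    ⟨E.extendOfNorm ι, fun v => LinearMap.extendOfNorm_eq hι ⟨c, hEb⟩ v⟩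
  have hcoe : ∀ (f : ℝ → V) (f' : V) (t : ℝ), HasDerivWithinAt f f' (Set.Icc (0 : ℝ) T) t →
      HasDerivWithinAt (fun t => (f t : H)) (f' : H) (Set.Icc (0 : ℝ) T) t := by
    intro f f' t hf
    exact V.subtypeL.hasFDerivAt.comp_hasDerivWithinAt t hf
  have hgc : ContinuousOn g (Set.Icc 0 T) := fun t ht => (hg t ht).continuousWithinAt
  have hbdd : BddAbove (Set.range fun s : Set.Icc (0 : ℝ) T => ‖g ↑s‖ ^ 2) := by
    have := isCompact_Icc.bddAbove_image (hgc.norm.pow 2)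
    rwa [Set.image_eq_range] at this
  set M := ⨆ s : Set.Icc (0 : ℝ) T, ‖g ↑s‖ ^ 2 with hM
  have hM0 : 0 ≤ M := Real.iSup_nonneg fun s => sq_nonneg _
  have hGM : ∀ t ∈ Set.Icc 0 T, ‖g t‖ ≤ √M := by
    intro t ht
    exact Real.le_sqrt_of_sq_le (le_ciSup hbdd ⟨t, ht⟩)
  have main := aux_main T c (√M) hT hc0 j F
    (by
      intro w
      refine hι.induction_on w (isClosed_le (by fun_prop) (by fun_prop)) ?_
      intro v
      rw [hF, hj, hnι, add_sub_cancel_left]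
      exact hE2 v)
    (by
      intro w
      refine hι.induction_on w (isClosed_le (by fun_prop) (by fun_prop)) ?_
      intro v
      rw [hj]
      simpa using hjb v)
    g ρ'' (fun t => (θ t : H)) (fun t => (θ' t : H)) (fun t => (θ'' t : H)) (fun t => ι (θ t))
    hgc hρ'' hGM (fun t ht => hcoe _ _ _ (hθ t ht)) (fun t ht => hcoe _ _ _ (hθ' t ht))
    (continuous_subtype_val.comp_continuousOn hθ'') (by simp [θ0]) (by simp [θ0'])
    (fun t => hj _)
    (by
      intro t ht w
      refine hι.induction_on w (isClosed_eq (by fun_prop) (by fun_prop)) ?_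
      intro v
      rw [hj, hF, hin, ← heq t ht v]
      ring) τ hτ
  have hcs := aux_cs T hT (fun s => ‖ρ'' s‖) hρ''.norm
  set R := ∫ s in (0:ℝ)..T, ‖ρ'' s‖ with hR
  set Q := ∫ s in (0:ℝ)..T, ‖ρ'' s‖ ^ 2 with hQ
  have hQ0 : 0 ≤ Q := intervalIntegral.integral_nonneg hT.le fun _ _ => sq_nonneg _
  have hg0 : 0 ≤ ∫ s in (0:ℝ)..T, ‖g' s‖ ^ 2 :=
    intervalIntegral.integral_nonneg hT.le fun _ _ => sq_nonneg _
  have hr0 : 0 ≤ ∫ s in (0:ℝ)..T, ‖ρ' s‖ ^ 2 :=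
    intervalIntegral.integral_nonneg hT.le fun _ _ => sq_nonneg _
  have h1 : ‖θ τ‖ ^ 2 ≤ (4 * T * c * √M + 2 * T * R) ^ 2 :=
    pow_le_pow_left₀ (norm_nonneg _) main 2
  have h2 : (4 * T * c * √M + 2 * T * R) ^ 2
      ≤ 32 * T ^ 2 * c ^ 2 * √M ^ 2 + 8 * T ^ 2 * R ^ 2 := by
    nlinarith [sq_nonneg (4 * T * c * √M - 2 * T * R)]
  rw [Real.sq_sqrt hM0, hc2] at h2
  have h3 : 8 * T ^ 2 * R ^ 2 ≤ 8 * T ^ 3 * Q := by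
    have := mul_le_mul_of_nonneg_left hcs (by positivity : 0 ≤ 8 * T ^ 2)
    linarith
  have h4 : 32 * T ^ 2 * (C₁ ^ 2 * h ^ 4 / α) * M = (32 * T ^ 2 * C₁ ^ 2 / α) * (h ^ 4 * M) := by
    ring
  set A := 32 * T ^ 2 * C₁ ^ 2 / α with hA
  have hA0 : 0 ≤ A := by positivity
  have hB0 : 0 ≤ 8 * T ^ 3 := by positivity
  set I := ∫ s in (0:ℝ)..T, ‖g' s‖ ^ 2
  set J := ∫ s in (0:ℝ)..T, ‖ρ' s‖ ^ 2
  have hM4 : 0 ≤ h ^ 4 * M := by positivity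
  have hI4 : 0 ≤ h ^ 4 * I := by positivity
  have hz : 0 ≤ ‖ρ' 0‖ ^ 2 := sq_nonneg _
  calc ‖θ τ‖ ^ 2 ≤ A * (h ^ 4 * M) + 8 * T ^ 3 * Q := by linarith
    _ ≤ A * (h ^ 4 * (M + I) + ‖ρ' 0‖ ^ 2 + J + Q)
        + 8 * T ^ 3 * (h ^ 4 * (M + I) + ‖ρ' 0‖ ^ 2 + J + Q) := by
      gcongr <;> linarith
    _ = _ := by ring
end

section
/- For every choice of constants 0 < α ≤ β, T > 0 and C₁ > 0 there exists a constant C > 0 with the following property. For every abstract FEM setting (H, V, ‖·‖_h, a_h) with constants α, β, every h > 0 and C_inv > 0 satisfying the inverse inequality ‖v‖_h ≤ C_inv h⁻² ‖v‖ for all v ∈ V, every linear map E : V → H with ‖E v‖ ≤ C₁ h² ‖v‖_h for all v ∈ V, every N ∈ ℕ with N ≥ 2 and time step k := T/N satisfying the CFL condition k ≤ β^{−1/2} C_inv^{−1} h², every continuously differentiable g : [0,T] → H, every σ¹, …, σ^{N−1} ∈ H, and every ζ⁰, …, ζᴺ ∈ V satisfying ((ζ^{n+1} − 2ζⁿ +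 ζ^{n−1})/k², v) + a_h(ζⁿ, v) = (g(nk), E v) + (σⁿ, v) for all v ∈ V and n = 1, …, N−1, one has for every 1 ≤ m ≤ N−1: ‖(ζ^{m+1} − ζ^m)/k‖² + ‖(ζ^{m+1} + ζ^m)/2‖_h² ≤ C ( ‖(ζ¹ − ζ⁰)/k‖² + ‖(ζ¹ + ζ⁰)/2‖_h² + h⁴ ( sup_{s ∈ [0,T]} ‖g(s)‖² + ∫₀ᵀ ‖g'(s)‖² ds ) + k Σ_{n=1}^{N−1} ‖σⁿ‖² ). -/
open scoped RealInnerProductSpace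

lemma aux_ident {H : Type} [NormedAddCommGroup H] [InnerProductSpace ℝ H]
    (V : Submodule ℝ H) (a : V →ₗ[ℝ] V →ₗ[ℝ] ℝ) (hs : ∀ w v : V, a w v = a v w)
    (k : ℝ) (hk : 0 < k) (x y z : V) :
    ⟪(((k ^ 2)⁻¹ • (z - (2 : ℝ) • y + x) : V) : H), ((z - x : V) : H)⟫ + a y (z - x)
    = (‖(k⁻¹ • (z - y) : V)‖ ^ 2 + a ((1 / 2 : ℝ) • (z + y)) ((1 / 2 : ℝ) • (z + y))
        - k ^ 2 / 4 * a (k⁻¹ • (z - y)) (k⁻¹ • (z - y)))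
      - (‖(k⁻¹ • (y - x) : V)‖ ^ 2 + a ((1 / 2 : ℝ) • (y + x)) ((1 / 2 : ℝ) • (y + x))
        - k ^ 2 / 4 * a (k⁻¹ • (y - x)) (k⁻¹ • (y - x))) := by
  rw [← Submodule.coe_inner, ← real_inner_self_eq_norm_sq, ← real_inner_self_eq_norm_sq]
  simp only [inner_add_left, inner_sub_left, inner_sub_right,
    real_inner_smul_left, real_inner_smul_right, map_add, map_sub, map_smul,
    LinearMap.add_apply, LinearMap.sub_apply, LinearMap.smul_apply, smul_eq_mul]
  rw [hs z y, hs y x, real_inner_comm y z, real_inner_comm x y, real_inner_comm x z]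
  field_simp
  ring

lemma aux_deriv {H : Type} [NormedAddCommGroup H] [InnerProductSpace ℝ H] [CompleteSpace H]
    (T : ℝ) (g g' : ℝ → H)
    (hg : ∀ t ∈ Set.Icc (0 : ℝ) T, HasDerivWithinAt g (g' t) (Set.Icc (0 : ℝ) T) t)
    (hc : ContinuousOn g' (Set.Icc (0 : ℝ) T)) (a b : ℝ) (ha : 0 ≤ a) (hab : a < b)
    (hb : b ≤ T) :
    ‖g b - g a‖ ^ 2 ≤ (b - a) * ∫ s in a..b, ‖g' s‖ ^ 2 := by
  have hsub : Set.Icc a b ⊆ Set.Icc 0 T := Set.Icc_subset_Icc ha hb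
  have hc' : ContinuousOn g' (Set.uIcc a b) := by
    rw [Set.uIcc_of_le hab.le]; exact hc.mono hsub
  have h1 : ∫ s in a..b, g' s = g b - g a := by
    apply intervalIntegral.integral_eq_sub_of_hasDerivAt_of_le hab.le
    · intro t ht
      exact ((hg t (hsub ht)).continuousWithinAt).mono hsub
    · intro t ht
      exact (hg t (hsub ⟨ht.1.le, ht.2.le⟩)).hasDerivAt
        (Icc_mem_nhds (ha.trans_lt ht.1) (ht.2.trans_le hb))
    · exact hc'.intervalIntegrable
  have h2 : ‖g b - g a‖ ≤ ∫ s in a..b, ‖g' s‖ := by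
    rw [← h1]; exact intervalIntegral.norm_integral_le_integral_norm hab.le
  set D := ‖g b - g a‖ with hD
  have hD0 : 0 ≤ D := norm_nonneg _
  have hba : 0 < b - a := sub_pos.2 hab
  set c := D / (b - a) with hcdef
  have hc0 : 0 ≤ c := by positivity
  have h3 : ∫ s in a..b, (2 * c) * ‖g' s‖ ≤ ∫ s in a..b, (‖g' s‖ ^ 2 + c ^ 2) := by
    apply intervalIntegral.integral_mono_on hab.le
    · exact (hc'.norm.const_mul _ |>.intervalIntegrable) 
    · exact ((hc'.norm.pow 2).add continuousOn_const).intervalIntegrable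
    · intro s _
      nlinarith [sq_nonneg (‖g' s‖ - c)]
  have hi2 : IntervalIntegrable (fun s => ‖g' s‖ ^ 2) MeasureTheory.volume a b :=
    (hc'.norm.pow 2).intervalIntegrable
  rw [intervalIntegral.integral_const_mul, intervalIntegral.integral_add
    hi2 (by simp), intervalIntegral.integral_const,
    smul_eq_mul] at h3
  have h4 : 2 * c * D ≤ 2 * c * ∫ s in a..b, ‖g' s‖ := by gcongr
  have h5 : D = c * (b - a) := by rw [hcdef]; field_simp
  have h6 : c * D ≤ ∫ s in a..b, ‖g' s‖ ^ 2 := by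
    have : (b - a) * c ^ 2 = c * D := by rw [h5]; ring
    linarith
  calc D ^ 2 = (b - a) * (c * D) := by rw [sq]; nth_rw 1 [h5]; ring
    _ ≤ _ := by gcongr

/-- Young-type bound. -/
lemma aux_young (p q e M X k : ℝ) (he : 0 < e) (hk : 0 < k) (hX : X ^ 2 ≤ M) (hq : q ≤ p * X) :
    2 * q ≤ e * k * M + p ^ 2 / (e * k) := by
  have h1 : 0 < e * k := by positivity
  have h2 : 2 * (p * X) ≤ e * k * X ^ 2 + p ^ 2 / (e * k) := by
    rw [← sub_nonneg]
    have : e * k * X ^ 2 + p ^ 2 / (e * k) - 2 * (p * X) = (e * k * X - p) ^ 2 / (e * k) := by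
      field_simp; ring
    rw [this]; positivity
  nlinarith

lemma aux_final (cM EJ E0 ij i0 aj a0 t1 t2 t3 q1 q2 bX X0 r1 r2 r3 r4 : ℝ)
    (h1 : EJ - 2 * ij ≤ E0 - 2 * i0 + t1 + t2 + t3) (h2 : cM ≤ EJ)
    (h3 : 2 * aj ≤ cM / 4 + q1) (h4 : 2 * a0 ≤ X0 + q2) (h5 : ij ≤ aj) (h6 : -a0 ≤ i0)
    (h7 : t1 ≤ cM / 4) (h8 : t2 ≤ r3) (h9 : t3 ≤ r4) (h10 : q1 + q2 ≤ r2)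
    (h11 : bX + X0 ≤ r1) (hE : E0 ≤ bX) : cM / 2 ≤ r1 + r2 + r3 + r4 := by
  linarith

set_option maxHeartbeats 4000000 in
/-- Error estimate for the explicit fully discrete scheme under the CFL condition. -/
theorem explicit_scheme_error (α β T C₁ : ℝ) (hα : 0 < α) (hαβ : α ≤ β) (hT : 0 < T)
    (hC₁ : 0 < C₁) :
    ∃ C > 0,
      ∀ (H : Type) [NormedAddCommGroup H] [InnerProductSpace ℝ H] [CompleteSpace H]
        (V : Submodule ℝ H) (Nh : Seminorm ℝ V) (a : V →ₗ[ℝ] V →ₗ[ℝ] ℝ),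
        (∀ w v : V, a w v = a v w) →
        (∀ w : V, α * Nh w ^ 2 ≤ a w w) →
        (∀ w v : V, |a w v| ≤ β * Nh w * Nh v) →
        ∀ (h Cinv : ℝ), 0 < h → 0 < Cinv →
          (∀ v : V, Nh v ≤ Cinv / h ^ 2 * ‖v‖) →
          ∀ (E : V →ₗ[ℝ] H), (∀ v : V, ‖E v‖ ≤ C₁ * h ^ 2 * Nh v) →
            ∀ (N : ℕ) (hN : 2 ≤ N) (k : ℝ), k = T / N →
              k ≤ (Real.sqrt β)⁻¹ * Cinv⁻¹ * h ^ 2 →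
              ∀ (g g' : ℝ → H),
                (∀ t ∈ Set.Icc (0 : ℝ) T, HasDerivWithinAt g (g' t) (Set.Icc (0 : ℝ) T) t) →
                ContinuousOn g' (Set.Icc (0 : ℝ) T) →
                ∀ (σ : ℕ → H) (ζ : ℕ → V),
                  (∀ n, 1 ≤ n → n ≤ N - 1 → ∀ v : V,
                    ⟪(((k ^ 2)⁻¹ • (ζ (n + 1) - (2 : ℝ) • ζ n + ζ (n - 1)) : V) : H),
                        (v : H)⟫ + a (ζ n) v
                      = ⟪g ((n : ℝ) * k), E v⟫ + ⟪σ n, (v : H)⟫) →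
                  ∀ m, 1 ≤ m → m ≤ N - 1 →
                    ‖(k⁻¹ • (ζ (m + 1) - ζ m) : V)‖ ^ 2
                        + Nh ((1 / 2 : ℝ) • (ζ (m + 1) + ζ m)) ^ 2
                      ≤ C * (‖(k⁻¹ • (ζ 1 - ζ 0) : V)‖ ^ 2
                          + Nh ((1 / 2 : ℝ) • (ζ 1 + ζ 0)) ^ 2
                          + h ^ 4 * ((⨆ s : Set.Icc (0 : ℝ) T, ‖g ↑s‖ ^ 2)
                              + ∫ s in (0 : ℝ)..T, ‖g' s‖ ^ 2)
                          + k * ∑ n ∈ Finset.Icc 1 (N - 1), ‖σ n‖ ^ 2) := by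
  have hβ : 0 < β := hα.trans_le hαβ
  obtain ⟨c, hc0, hc1, hc2⟩ : ∃ c : ℝ, 0 < c ∧ c ≤ 3 / 4 ∧ c ≤ α :=
    ⟨min (3 / 4) α, by positivity, min_le_left _ _, min_le_right _ _⟩
  obtain ⟨e, he⟩ : ∃ e : ℝ, e = c / (8 * T) := ⟨_, rfl⟩
  have he0 : 0 < e := by rw [he]; positivity
  obtain ⟨K, hK⟩ : ∃ K : ℝ, K = (2 + β) + C₁ ^ 2 * (4 / c + 1) + C₁ ^ 2 / e + 1 / e := ⟨_, rfl⟩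
  have hK0 : 0 < K := by rw [hK]; positivity
  have hKa : 2 + β ≤ K := by
    rw [hK]
    have : 0 ≤ C₁ ^ 2 * (4 / c + 1) + C₁ ^ 2 / e + 1 / e := by positivity
    linarith
  have hKb : C₁ ^ 2 * (4 / c + 1) ≤ K := by
    rw [hK]
    have : 0 ≤ (2 + β) + C₁ ^ 2 / e + 1 / e := by positivity
    linarith
  have hKc : C₁ ^ 2 / e ≤ K := by
    rw [hK]
    have : 0 ≤ (2 + β) + C₁ ^ 2 * (4 / c + 1) + 1 / e := by positivity
    linarith
  have hKd : 1 / e ≤ K := by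
    rw [hK]
    have : 0 ≤ (2 + β) + C₁ ^ 2 * (4 / c + 1) + C₁ ^ 2 / e := by positivity
    linarith
  refine ⟨2 * K / c, by positivity, ?_⟩
  intro H _ _ _ V Nh a hs hco hbd h Cinv hh hCinv hinv E hE N hN k hk hcfl g g' hg hg' σ ζ hζ m hm1 hm2
  have hNpos : (0 : ℝ) < N := by
    have : 0 < N := by omega
    exact_mod_cast this
  have hk0 : 0 < k := by rw [hk]; positivity
  have hkN : k * N = T := by rw [hk]; field_simp
  obtain ⟨d, hd⟩ : ∃ d : ℕ → V, ∀ n, d n = k⁻¹ • (ζ (n + 1) - ζ n) := ⟨_, fun _ => rfl⟩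
  obtain ⟨w, hw⟩ : ∃ w : ℕ → V, ∀ n, w n = (1 / 2 : ℝ) • (ζ (n + 1) + ζ n) := ⟨_, fun _ => rfl⟩
  obtain ⟨X, hX⟩ : ∃ X : ℕ → ℝ, ∀ n, X n = ‖d n‖ ^ 2 + Nh (w n) ^ 2 := ⟨_, fun _ => rfl⟩
  obtain ⟨En, hEn⟩ : ∃ En : ℕ → ℝ, ∀ n, En n = ‖d n‖ ^ 2 + a (w n) (w n) - k ^ 2 / 4 * a (d n) (d n) :=
    ⟨_, fun _ => rfl⟩
  -- CFL
  have hcfl2 : k ^ 2 * β * (Cinv / h ^ 2) ^ 2 ≤ 1 := by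
    have hsq : 0 < Real.sqrt β := Real.sqrt_pos.2 hβ
    have h1 : k * Real.sqrt β * (Cinv / h ^ 2) ≤ 1 := by
      calc k * Real.sqrt β * (Cinv / h ^ 2)
          ≤ ((Real.sqrt β)⁻¹ * Cinv⁻¹ * h ^ 2) * Real.sqrt β * (Cinv / h ^ 2) := by gcongr
        _ = 1 := by field_simp
    have h2 : (k * Real.sqrt β * (Cinv / h ^ 2)) ^ 2 ≤ 1 := by
      apply pow_le_one₀ (by positivity) h1
    calc k ^ 2 * β * (Cinv / h ^ 2) ^ 2 = (k * Real.sqrt β * (Cinv / h ^ 2)) ^ 2 := by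
          rw [mul_pow, mul_pow, Real.sq_sqrt hβ.le]
      _ ≤ 1 := h2
  have hadd : ∀ v : V, k ^ 2 * a v v ≤ ‖v‖ ^ 2 := by
    intro v
    have h1 : a v v ≤ β * Nh v * Nh v := (le_abs_self _).trans (hbd v v)
    have h0 : 0 ≤ Nh v := apply_nonneg Nh v
    calc k ^ 2 * a v v ≤ k ^ 2 * (β * Nh v * Nh v) := by gcongr
      _ ≤ k ^ 2 * (β * (Cinv / h ^ 2 * ‖v‖) * (Cinv / h ^ 2 * ‖v‖)) := by
          gcongr <;> exact hinv v
      _ = (k ^ 2 * β * (Cinv / h ^ 2) ^ 2) * ‖v‖ ^ 2 := by ring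
      _ ≤ 1 * ‖v‖ ^ 2 := by gcongr
      _ = _ := one_mul _
  have haw0 : ∀ v : V, 0 ≤ a v v := fun v => le_trans (by positivity) (hco v)
  have hElow : ∀ n, c * X n ≤ En n := by
    intro n
    rw [hX, hEn]
    have h1 := hadd (d n)
    have h2 := hco (w n)
    have h3 : c * ‖d n‖ ^ 2 ≤ 3 / 4 * ‖d n‖ ^ 2 := by gcongr
    have h4 : c * Nh (w n) ^ 2 ≤ α * Nh (w n) ^ 2 := by gcongr
    linarith
  have hEup : En 0 ≤ (1 + β) * X 0 := by
    rw [hX, hEn]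
    have h1 : a (w 0) (w 0) ≤ β * Nh (w 0) * Nh (w 0) := (le_abs_self _).trans (hbd _ _)
    have h2 : 0 ≤ k ^ 2 / 4 * a (d 0) (d 0) := mul_nonneg (by positivity) (haw0 _)
    have h3 : 0 ≤ β * ‖d 0‖ ^ 2 := by positivity
    nlinarith [sq_nonneg (Nh (w 0))]
  -- max
  obtain ⟨M, j, hj, hMj, hM⟩ : ∃ (M : ℝ) (j : ℕ), j ≤ N - 1 ∧ M = X j ∧ ∀ n, n ≤ N - 1 → X n ≤ M := by
    obtain ⟨j, hj, hmax⟩ := Finset.exists_max_image (Finset.range N) X ⟨0, by simp; omega⟩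
    rw [Finset.mem_range] at hj
    exact ⟨X j, j, by omega, rfl, fun n hn => hmax n (by rw [Finset.mem_range]; omega)⟩
  have hNw : ∀ n, n ≤ N - 1 → Nh (w n) ^ 2 ≤ M := fun n hn =>
    le_trans (by rw [hX]; nlinarith [sq_nonneg ‖d n‖]) (hM n hn)
  have hNd : ∀ n, n ≤ N - 1 → ‖d n‖ ^ 2 ≤ M := fun n hn =>
    le_trans (by rw [hX]; nlinarith [sq_nonneg (Nh (w n))]) (hM n hn)
  obtain ⟨F, hF⟩ : ∃ F : ℕ → ℝ, ∀ n, F n = En n - 2 * ⟪g ((n : ℝ) * k), E (w n)⟫ := ⟨_, fun _ => rfl⟩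
  have hnk : ∀ n : ℕ, n ≤ N - 1 → (n : ℝ) * k ≤ T := by
    intro n hn
    have : (n : ℝ) ≤ N := by
      have : n ≤ N := by omega
      exact_mod_cast this
    nlinarith
  have hcn : ContinuousOn (fun s => ‖g' s‖ ^ 2) (Set.Icc 0 T) := hg'.norm.pow 2
  have hint : ∀ p q : ℝ, 0 ≤ p → p ≤ T → 0 ≤ q → q ≤ T →
      IntervalIntegrable (fun s => ‖g' s‖ ^ 2) MeasureTheory.volume p q := by
    intro p q hp hp' hq hq'
    apply ContinuousOn.intervalIntegrable
    exact hcn.mono (Set.uIcc_subset_Icc ⟨hp, hp'⟩ ⟨hq, hq'⟩)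
  have hstep : ∀ n, n + 1 ≤ N - 1 → F (n + 1) ≤ F n + 2 * e * k * M
      + C₁ ^ 2 * h ^ 4 / e * (∫ s in ((n : ℝ) * k)..(((n + 1 : ℕ) : ℝ) * k), ‖g' s‖ ^ 2)
      + k / e * ‖σ (n + 1)‖ ^ 2 := by
    intro n hn
    have hz := hζ (n + 1) (by omega) hn (ζ (n + 1 + 1) - ζ n)
    simp only [Nat.add_sub_cancel] at hz
    rw [aux_ident V a hs k hk0, ← hd, ← hd, ← hw, ← hw, ← hEn, ← hEn] at hz
    have e1 : ζ (n + 1 + 1) - ζ n = (2 : ℝ) • (w (n + 1) - w n) := by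
      rw [hw, hw]; module
    have e2 : ζ (n + 1 + 1) - ζ n = k • (d (n + 1) + d n) := by
      rw [hd, hd, ← smul_add, smul_smul, mul_inv_cancel₀ hk0.ne', one_smul]; abel
    have i1 : ⟪g (((n + 1 : ℕ) : ℝ) * k), E (ζ (n + 1 + 1) - ζ n)⟫
        = 2 * ⟪g (((n + 1 : ℕ) : ℝ) * k), E (w (n + 1))⟫ - 2 * ⟪g (((n + 1 : ℕ) : ℝ) * k), E (w n)⟫ := by
      rw [e1, map_smul, map_sub, real_inner_smul_right, inner_sub_right]; ring
    have i2 : ⟪σ (n + 1), ((ζ (n + 1 + 1) - ζ n : V) : H)⟫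
        ≤ e * k * M + k / e * ‖σ (n + 1)‖ ^ 2 := by
      have j1 : ∀ i, i ≤ N - 1 → 2 * (k * ⟪σ (n + 1), (d i : H)⟫)
          ≤ e * k * M + k / e * ‖σ (n + 1)‖ ^ 2 := by
        intro i hi
        have := aux_young (k * ‖σ (n + 1)‖) (k * ⟪σ (n + 1), (d i : H)⟫) e M ‖d i‖ k he0 hk0
          (hNd i hi) (by
            rw [mul_assoc]; gcongr
            exact real_inner_le_norm _ _)
        convert this using 2
        field_simp
      have j2 := j1 (n + 1) hn
      have j3 := j1 n (by omega)
      rw [e2, Submodule.coe_smul, Submodule.coe_add, real_inner_smul_right, inner_add_right]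
      linarith
    have i3 : 2 * ⟪g ((n : ℝ) * k) - g (((n + 1 : ℕ) : ℝ) * k), E (w n)⟫
        ≤ e * k * M + C₁ ^ 2 * h ^ 4 / e * (∫ s in ((n : ℝ) * k)..(((n + 1 : ℕ) : ℝ) * k), ‖g' s‖ ^ 2) := by
      obtain ⟨J, hJ⟩ : ∃ J : ℝ, J = ∫ s in ((n : ℝ) * k)..(((n + 1 : ℕ) : ℝ) * k), ‖g' s‖ ^ 2 := ⟨_, rfl⟩
      have hdg := aux_deriv T g g' hg hg' ((n : ℝ) * k) (((n + 1 : ℕ) : ℝ) * k) (by positivity)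
        (by push_cast; nlinarith) (hnk _ hn)
      rw [← hJ] at hdg ⊢
      rw [norm_sub_rev] at hdg
      have hdk : ((n + 1 : ℕ) : ℝ) * k - (n : ℝ) * k = k := by push_cast; ring
      rw [hdk] at hdg
      set D := ‖g ((n : ℝ) * k) - g (((n + 1 : ℕ) : ℝ) * k)‖ with hD
      have hy := aux_young (D * (C₁ * h ^ 2))
        ⟪g ((n : ℝ) * k) - g (((n + 1 : ℕ) : ℝ) * k), E (w n)⟫ e M (Nh (w n)) k he0 hk0
        (hNw n (by omega)) (by
          refine (real_inner_le_norm _ _).trans ?_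
          rw [mul_assoc]
          gcongr
          exact hE _)
      have hy2 : (D * (C₁ * h ^ 2)) ^ 2 / (e * k) ≤ C₁ ^ 2 * h ^ 4 / e * J := by
        calc (D * (C₁ * h ^ 2)) ^ 2 / (e * k) = C₁ ^ 2 * h ^ 4 / e * (D ^ 2 / k) := by field_simp
          _ ≤ C₁ ^ 2 * h ^ 4 / e * J := by
            gcongr
            rw [div_le_iff₀ hk0]; linarith
      linarith
    rw [inner_sub_left] at i3
    rw [hF, hF]
    linarith
  have hsum : ∀ n, n ≤ N - 1 → F n ≤ F 0 + 2 * e * k * M * n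
      + C₁ ^ 2 * h ^ 4 / e * (∫ s in (0 : ℝ)..((n : ℝ) * k), ‖g' s‖ ^ 2)
      + k / e * ∑ i ∈ Finset.Icc 1 n, ‖σ i‖ ^ 2 := by
    intro n
    induction n with
    | zero => intro _; simp
    | succ n ih =>
      intro hn
      have h1 := ih (by omega)
      have h2 := hstep n hn
      rw [Finset.sum_Icc_succ_top (by omega), ← intervalIntegral.integral_add_adjacent_intervals
        (hint 0 ((n : ℝ) * k) le_rfl hT.le (by positivity) (hnk n (by omega)))
        (hint ((n : ℝ) * k) (((n + 1 : ℕ) : ℝ) * k) (by positivity) (hnk n (by omega))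
          (by positivity) (hnk _ hn)), mul_add, mul_add]
      have h3 : 2 * e * k * M * ((n + 1 : ℕ) : ℝ) = 2 * e * k * M * n + 2 * e * k * M := by
        push_cast; ring
      rw [h3]
      linarith
  obtain ⟨G, hG⟩ : ∃ G : ℝ, G = ⨆ s : Set.Icc (0 : ℝ) T, ‖g ↑s‖ ^ 2 := ⟨_, rfl⟩
  obtain ⟨J, hJ⟩ : ∃ J : ℝ, J = ∫ s in (0 : ℝ)..T, ‖g' s‖ ^ 2 := ⟨_, rfl⟩
  obtain ⟨S, hS⟩ : ∃ S : ℝ, S = ∑ n ∈ Finset.Icc 1 (N - 1), ‖σ n‖ ^ 2 := ⟨_, rfl⟩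
  have hJ0 : 0 ≤ J := by
    rw [hJ]; exact intervalIntegral.integral_nonneg hT.le (fun _ _ => by positivity)
  have hS0 : 0 ≤ S := by rw [hS]; positivity
  have hGb : ∀ s ∈ Set.Icc (0 : ℝ) T, ‖g s‖ ^ 2 ≤ G := by
    intro s hs
    have hgc : ContinuousOn (fun s => ‖g s‖ ^ 2) (Set.Icc 0 T) :=
      ContinuousOn.pow (ContinuousOn.norm (fun t ht => (hg t ht).continuousWithinAt)) 2
    have hb := (isCompact_Icc (a := (0 : ℝ)) (b := T)).bddAbove_image hgc
    rw [hG]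
    apply le_ciSup (f := fun s : Set.Icc (0 : ℝ) T => ‖g ↑s‖ ^ 2) _ (⟨s, hs⟩ : Set.Icc (0 : ℝ) T)
    refine hb.mono ?_
    rintro _ ⟨t, rfl⟩
    exact ⟨t, t.2, rfl⟩
  have hG0 : 0 ≤ G := le_trans (by positivity) (hGb 0 ⟨le_rfl, hT.le⟩)
  have hgE : ∀ (q : ℝ) (n : ℕ), 0 < q → n ≤ N - 1 → ∀ Y, Nh (w n) ^ 2 ≤ Y →
      2 * |⟪g ((n : ℝ) * k), E (w n)⟫| ≤ q * Y + C₁ ^ 2 * h ^ 4 / q * G := by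
    intro q n hq hn Y hY
    have hy := aux_young (‖g ((n : ℝ) * k)‖ * (C₁ * h ^ 2)) |⟪g ((n : ℝ) * k), E (w n)⟫|
      q Y (Nh (w n)) 1 hq one_pos hY (by
          refine (abs_real_inner_le_norm _ _).trans ?_
          rw [mul_assoc]
          gcongr
          exact hE _)
    have hy2 : (‖g ((n : ℝ) * k)‖ * (C₁ * h ^ 2)) ^ 2 / (q * 1) ≤ C₁ ^ 2 * h ^ 4 / q * G := by
      calc (‖g ((n : ℝ) * k)‖ * (C₁ * h ^ 2)) ^ 2 / (q * 1)
          = C₁ ^ 2 * h ^ 4 / q * ‖g ((n : ℝ) * k)‖ ^ 2 := by field_simp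
        _ ≤ _ := by
          gcongr
          exact hGb _ ⟨by positivity, hnk n hn⟩
    linarith
  have hM0 : 0 ≤ M := le_trans (by positivity) (hNd 0 (by omega))
  have hX0 : 0 ≤ X 0 := by rw [hX]; positivity
  have hfin : c * M / 2 ≤ K * (X 0 + h ^ 4 * (G + J) + k * S) := by
    have h1 := hsum j hj
    have h2 := hElow j
    rw [← hMj] at h2
    have h3 := hgE (c / 4) j (by positivity) hj M (hNw j hj)
    have h4 := hgE 1 0 one_pos (by omega) (X 0) (by rw [hX]; nlinarith [sq_nonneg ‖d 0‖])
    have h5 := le_abs_self ⟪g ((j : ℝ) * k), E (w j)⟫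
    have h6 := neg_abs_le ⟪g (((0 : ℕ) : ℝ) * k), E (w 0)⟫
    rw [hF, hF] at h1
    have h7 : 2 * e * k * M * j ≤ c / 4 * M := by
      have hb : k * j ≤ T := by rw [mul_comm]; exact hnk j hj
      calc 2 * e * k * M * j = 2 * e * M * (k * j) := by ring
        _ ≤ 2 * e * M * T := by gcongr
        _ = c / 4 * M := by rw [he]; field_simp; ring
    have h8 : C₁ ^ 2 * h ^ 4 / e * (∫ s in (0 : ℝ)..((j : ℝ) * k), ‖g' s‖ ^ 2) ≤ K * (h ^ 4 * J) := by
      have hb : (∫ s in (0 : ℝ)..((j : ℝ) * k), ‖g' s‖ ^ 2) ≤ J := by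
        rw [hJ]
        apply intervalIntegral.integral_mono_interval le_rfl (by positivity) (hnk j hj)
        · exact Filter.Eventually.of_forall (fun _ => by simp)
        · exact hint 0 T le_rfl hT.le hT.le le_rfl
      calc _ ≤ C₁ ^ 2 * h ^ 4 / e * J := by gcongr
        _ = C₁ ^ 2 / e * (h ^ 4 * J) := by ring
        _ ≤ _ := by gcongr
    have h9 : k / e * ∑ i ∈ Finset.Icc 1 j, ‖σ i‖ ^ 2 ≤ K * (k * S) := by
      have hb : ∑ i ∈ Finset.Icc 1 j, ‖σ i‖ ^ 2 ≤ S := by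
        rw [hS]
        apply Finset.sum_le_sum_of_subset_of_nonneg (Finset.Icc_subset_Icc_right hj)
        intros; positivity
      calc _ ≤ k / e * S := by gcongr
        _ = 1 / e * (k * S) := by ring
        _ ≤ _ := by gcongr
    have h10 : C₁ ^ 2 * h ^ 4 / (c / 4) * G + C₁ ^ 2 * h ^ 4 / 1 * G ≤ K * (h ^ 4 * G) := by
      calc _ = C₁ ^ 2 * (4 / c + 1) * (h ^ 4 * G) := by field_simp
        _ ≤ _ := by gcongr
    have h11 : (2 + β) * X 0 ≤ K * X 0 := by gcongr
    have h12 : K * (X 0 + h ^ 4 * (G + J) + k * S)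
      = K * X 0 + K * (h ^ 4 * G) + K * (h ^ 4 * J) + K * (k * S) := by ring
    rw [h12]
    have h3' : 2 * |⟪g ((j : ℝ) * k), E (w j)⟫| ≤ c * M / 4 + C₁ ^ 2 * h ^ 4 / (c / 4) * G :=
      h3.trans_eq (by ring)
    have h11' : (1 + β) * X 0 + X 0 ≤ K * X 0 := le_trans (le_of_eq (by ring)) h11
    rw [one_mul] at h4
    exact aux_final _ _ _ _ _ _ _ _ _ _ _ _ _ _ _ _ _ _ h1 h2 h3' h4 h5 h6
      (h7.trans_eq (by ring)) h8 h9 h10 h11' hEup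
  have hXm := hM m hm2
  have hX0' := hX 0
  rw [hX, hd, hw] at hXm
  rw [hd, hw] at hX0'
  rw [← hG, ← hJ, ← hS]
  refine hXm.trans ?_
  simp only [zero_add] at hX0'
  rw [← hX0']
  calc M = 2 / c * (c * M / 2) := by field_simp
    _ ≤ 2 / c * (K * (X 0 + h ^ 4 * (G + J) + k * S)) := by gcongr
    _ = _ := by ring
end

section
/- For every choice of constants 0 < α ≤ β, T > 0 and C₁ > 0 there exists a constant C > 0 with the following property. For every abstract FEM setting (H, V, ‖·‖_h, a_h) with constants α, β, every h > 0, every linear map E : V → H with ‖E v‖ ≤ C₁ h² ‖v‖_h for all v ∈ V, every N ∈ ℕ with N ≥ 2 and time step k := T/N, every continuously differentiable g : [0,T] → H, every σ¹, …, σ^{N−1} ∈ H, and every ζ⁰, …, ζᴺ ∈ V satisfying ((ζ^{n+1} − 2ζⁿ + ζ^{n−1})/k², v) + a_h((ζ^{n+1} + 2ζⁿ + ζ^{n−1})/4, v) = ((g((n+1)k) + 2g(nk) + g((n−1)k))/4, E v) + (σⁿ, v) for all v ∈ V and n = 1, …, N−1, one has for every 1 ≤ m ≤ N−1: ‖(ζ^{m+1}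 − ζ^m)/k‖² + ‖(ζ^{m+1} + ζ^m)/2‖_h² ≤ C ( ‖(ζ¹ − ζ⁰)/k‖² + ‖(ζ¹ + ζ⁰)/2‖_h² + h⁴ ( sup_{s ∈ [0,T]} ‖g(s)‖² + ∫₀ᵀ ‖g'(s)‖² ds ) + k Σ_{n=1}^{N−1} ‖σⁿ‖² ). No CFL condition or inverse inequality is assumed. -/
open scoped RealInnerProductSpace

lemma core_bound {H : Type} [NormedAddCommGroup H] [InnerProductSpace ℝ H]
    (M : ℕ) (Φ : ℕ → ℝ) (d e G σ : ℕ → H) (Fb : ℕ → ℝ) (k S L c : ℝ) (hk : 0 ≤ k) (hc : 0 ≤ c)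
    (hΦ : ∀ n, n + 1 ≤ M → Φ (n+1) = Φ n + 2 * ⟪G (n+1), e (n+1) - e n⟫
      + k * ⟪σ (n+1), d (n+1) + d n⟫)
    (hd : ∀ n ≤ M, ‖d n‖ ^ 2 ≤ Φ n) (he : ∀ n ≤ M, ‖e n‖ ^ 2 ≤ c ^ 2 * Φ n)
    (hS : 0 ≤ S) (hL : 0 ≤ L)
    (hG : ∀ n, 1 ≤ n → n ≤ M → ‖G n‖ ≤ S)
    (hGF : ∀ n, 1 ≤ n → n + 1 ≤ M → ‖G (n+1) - G n‖ ≤ Fb (n+1) - Fb n)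
    (hF : ∀ n, 1 ≤ n → n ≤ M → Fb n - Fb 1 ≤ L) (m : ℕ) (hm : m ≤ M) :
    Φ m ≤ 2 * Φ 0 + (2 * c * (2 * S + L) + 2 * (k * ∑ n ∈ Finset.Icc 1 M, ‖σ n‖)) ^ 2 := by
  obtain ⟨q, hq, hmax⟩ := Finset.exists_max_image (Finset.range (M+1)) Φ ⟨0, by simp⟩
  have hqM : q ≤ M := by simpa [Nat.lt_succ_iff] using hq
  have hmax' : ∀ n ≤ M, Φ n ≤ Φ q := fun n hn => hmax n (by simpa [Nat.lt_succ_iff] using hn)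
  have hΦ0 : ∀ n ≤ M, 0 ≤ Φ n := fun n hn => (sq_nonneg _).trans (hd n hn)
  set X := Real.sqrt (Φ q) with hX
  have hX0 : 0 ≤ X := Real.sqrt_nonneg _
  have hX2 : X ^ 2 = Φ q := Real.sq_sqrt (hΦ0 q hqM)
  have hdX : ∀ n ≤ M, ‖d n‖ ≤ X := fun n hn =>
    abs_le_of_sq_le_sq' (by rw [hX2]; exact (hd n hn).trans (hmax' n hn)) hX0 |>.2
  have heX : ∀ n ≤ M, ‖e n‖ ≤ c * X := fun n hn =>
    abs_le_of_sq_le_sq' (by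
      rw [mul_pow, hX2]
      exact (he n hn).trans (mul_le_mul_of_nonneg_left (hmax' n hn) (sq_nonneg c)))
      (mul_nonneg hc hX0) |>.2
  have hcX : 0 ≤ c * X := mul_nonneg hc hX0
  have hσ : ∀ n, n + 1 ≤ M → k * ⟪σ (n+1), d (n+1) + d n⟫ ≤ 2 * X * (k * ‖σ (n+1)‖) := by
    intro n hn
    have h1 : ⟪σ (n+1), d (n+1) + d n⟫ ≤ ‖σ (n+1)‖ * (2 * X) := by
      refine (real_inner_le_norm _ _).trans (mul_le_mul_of_nonneg_left ?_ (norm_nonneg _))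
      refine (norm_add_le _ _).trans ?_
      linarith [hdX (n+1) hn, hdX n (by omega)]
    calc _ ≤ k * (‖σ (n+1)‖ * (2 * X)) := mul_le_mul_of_nonneg_left h1 hk
      _ = _ := by ring
  have key : ∀ m, m + 1 ≤ M → Φ (m+1) ≤ Φ 0 + 2 * ⟪G (m+1), e (m+1)⟫
      + 2 * (c * X) * (S + (Fb (m+1) - Fb 1)) + 2 * X * (k * ∑ n ∈ Finset.Icc 1 (m+1), ‖σ n‖) := by
    intro m
    induction m with
    | zero =>
      intro hm
      have h1 := hΦ 0 hm
      have h2 := hσ 0 hm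
      have h3 : -⟪G 1, e 0⟫ ≤ S * (c * X) := by
        refine (neg_le_abs _).trans ((abs_real_inner_le_norm _ _).trans ?_)
        exact mul_le_mul (hG 1 le_rfl hm) (heX 0 (by omega)) (norm_nonneg _) hS
      simp only [zero_add, inner_sub_right] at h1 h2 ⊢
      simp only [Finset.Icc_self, Finset.sum_singleton]
      nlinarith
    | succ m ih =>
      intro hm
      have h0 := ih (by omega)
      have h1 := hΦ (m+1) hm
      have h2 := hσ (m+1) hm
      have h3 : -⟪G (m+1+1) - G (m+1), e (m+1)⟫ ≤ (Fb (m+1+1) - Fb (m+1)) * (c * X) := by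
        refine (neg_le_abs _).trans ((abs_real_inner_le_norm _ _).trans ?_)
        have := hGF (m+1) (by omega) hm
        exact mul_le_mul this (heX _ (by omega)) (norm_nonneg _) ((norm_nonneg _).trans this)
      rw [Finset.sum_Icc_succ_top (by omega)]
      simp only [inner_sub_right, inner_sub_left] at h1 h3
      nlinarith
  set D := 2 * c * (2 * S + L) + 2 * (k * ∑ n ∈ Finset.Icc 1 M, ‖σ n‖) with hD
  have hsum0 : ∀ j, 0 ≤ k * ∑ n ∈ Finset.Icc 1 j, ‖σ n‖ := fun j =>
    mul_nonneg hk (Finset.sum_nonneg fun _ _ => norm_nonneg _)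
  have fin : Φ q ≤ Φ 0 + X * D := by
    have hD0 : 0 ≤ D := by
      have := hsum0 M
      positivity
    rcases q with _ | p
    · nlinarith
    · have h1 := key p hqM
      have h2 : ⟪G (p+1), e (p+1)⟫ ≤ S * (c * X) :=
        (real_inner_le_norm _ _).trans
          (mul_le_mul (hG _ (by omega) hqM) (heX _ hqM) (norm_nonneg _) hS)
      have h3 : 2 * (c * X) * (S + (Fb (p+1) - Fb 1)) ≤ 2 * (c * X) * (S + L) :=
        mul_le_mul_of_nonneg_left (by linarith [hF (p+1) (by omega) hqM]) (by positivity)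
      have h4 : 2 * X * (k * ∑ n ∈ Finset.Icc 1 (p+1), ‖σ n‖)
          ≤ 2 * X * (k * ∑ n ∈ Finset.Icc 1 M, ‖σ n‖) := by
        refine mul_le_mul_of_nonneg_left (mul_le_mul_of_nonneg_left ?_ hk) (by positivity)
        exact Finset.sum_le_sum_of_subset_of_nonneg
          (Finset.Icc_subset_Icc_right hqM) fun _ _ _ => norm_nonneg _
      have : X * D = 2 * (c * X) * (2 * S + L) + 2 * X * (k * ∑ n ∈ Finset.Icc 1 M, ‖σ n‖) := by
        rw [hD]; ring
      linarith
  have := hmax' m hm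
  nlinarith [sq_nonneg (X - D)]

lemma g_facts {H : Type} [NormedAddCommGroup H] [InnerProductSpace ℝ H] [CompleteSpace H]
    (T : ℝ) (hT : 0 < T) (g g' : ℝ → H)
    (hg : ∀ t ∈ Set.Icc (0 : ℝ) T, HasDerivWithinAt g (g' t) (Set.Icc (0 : ℝ) T) t)
    (hg' : ContinuousOn g' (Set.Icc (0 : ℝ) T)) :
    ∃ (F : ℝ → ℝ) (S : ℝ), 0 ≤ S ∧ S ^ 2 = (⨆ s : Set.Icc (0 : ℝ) T, ‖g ↑s‖ ^ 2) ∧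
      (∀ s ∈ Set.Icc (0 : ℝ) T, ‖g s‖ ≤ S) ∧
      (∀ s t, 0 ≤ s → s ≤ t → t ≤ T → ‖g t - g s‖ ≤ F t - F s) ∧
      (F T - F 0) ^ 2 ≤ T * ∫ s in (0 : ℝ)..T, ‖g' s‖ ^ 2 := by
  have hgc : ContinuousOn g (Set.Icc 0 T) := fun t ht => (hg t ht).continuousWithinAt
  have hb : BddAbove (Set.range fun s : Set.Icc (0 : ℝ) T => ‖g ↑s‖ ^ 2) := by
    have := (isCompact_Icc.image_of_continuousOn ((hgc.norm).pow 2)).bddAbove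
    rwa [Set.image_eq_range] at this
  have hS0 : 0 ≤ (⨆ s : Set.Icc (0 : ℝ) T, ‖g ↑s‖ ^ 2) := Real.iSup_nonneg fun _ => sq_nonneg _
  have hint : ∀ s t, 0 ≤ s → s ≤ t → t ≤ T →
      IntervalIntegrable (fun x => ‖g' x‖) MeasureTheory.volume s t := fun s t hs hst ht =>
    ContinuousOn.intervalIntegrable_of_Icc hst (hg'.norm.mono (Set.Icc_subset_Icc hs ht))
  refine ⟨fun t => ∫ x in (0:ℝ)..t, ‖g' x‖, Real.sqrt _, Real.sqrt_nonneg _, Real.sq_sqrt hS0,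
    ?_, ?_, ?_⟩
  · intro s hs
    exact Real.le_sqrt_of_sq_le (le_ciSup hb ⟨s, hs⟩)
  · intro s t hs hst ht
    have h1 : ∫ x in s..t, g' x = g t - g s := by
      refine intervalIntegral.integral_eq_sub_of_hasDerivAt_of_le hst
        (hgc.mono (Set.Icc_subset_Icc hs ht)) (fun x hx => ?_)
        (ContinuousOn.intervalIntegrable_of_Icc hst (hg'.mono (Set.Icc_subset_Icc hs ht)))
      have hx0 : 0 < x := lt_of_le_of_lt hs hx.1
      have hxT : x < T := lt_of_lt_of_le hx.2 ht
      exact (hg x ⟨hx0.le, hxT.le⟩).hasDerivAt (Icc_mem_nhds hx0 hxT)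
    have h2 := intervalIntegral.integral_interval_sub_left
      (hint 0 t le_rfl (hs.trans hst) ht) (hint 0 s le_rfl hs (hst.trans ht))
    simp only
    rw [h2, ← h1]
    exact intervalIntegral.norm_integral_le_integral_norm hst
  · simp only [intervalIntegral.integral_same, sub_zero]
    set L := ∫ x in (0:ℝ)..T, ‖g' x‖ with hL
    have i1 := hint 0 T le_rfl hT.le le_rfl
    have i2 : IntervalIntegrable (fun x => ‖g' x‖ ^ 2) MeasureTheory.volume 0 T :=
      ContinuousOn.intervalIntegrable_of_Icc hT.le (hg'.norm.pow 2)
    have h0 : 0 ≤ ∫ x in (0:ℝ)..T, (‖g' x‖ - L / T) ^ 2 :=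
      intervalIntegral.integral_nonneg hT.le fun _ _ => sq_nonneg _
    have h1 : ∫ x in (0:ℝ)..T, (‖g' x‖ - L / T) ^ 2
        = (∫ x in (0:ℝ)..T, ‖g' x‖ ^ 2) - 2 * (L / T) * L + T * (L / T) ^ 2 := by
      have : ∀ x, (‖g' x‖ - L / T) ^ 2 = ‖g' x‖ ^ 2 - 2 * (L / T) * ‖g' x‖ + (L / T) ^ 2 :=
        fun x => by ring
      simp only [this]
      rw [intervalIntegral.integral_add (i2.sub (i1.const_mul _)) (by simp),
        intervalIntegral.integral_sub i2 (i1.const_mul _), intervalIntegral.integral_const_mul,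
        intervalIntegral.integral_const]
      simp [← hL]
    rw [h1] at h0
    have h2 : 0 ≤ T * ((∫ x in (0:ℝ)..T, ‖g' x‖ ^ 2) - 2 * (L / T) * L + T * (L / T) ^ 2) :=
      mul_nonneg hT.le h0
    have h3 : T * ((∫ x in (0:ℝ)..T, ‖g' x‖ ^ 2) - 2 * (L / T) * L + T * (L / T) ^ 2)
      = T * (∫ x in (0:ℝ)..T, ‖g' x‖ ^ 2) - L ^ 2 := by field_simp; ring
    linarith

set_option maxHeartbeats 2000000 in
/-- Error estimate for the implicit fully discrete scheme (no CFL condition and no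
inverse inequality are assumed). -/
theorem implicit_scheme_error (α β T C₁ : ℝ) (hα : 0 < α) (hαβ : α ≤ β) (hT : 0 < T)
    (hC₁ : 0 < C₁) :
    ∃ C > 0,
      ∀ (H : Type) [NormedAddCommGroup H] [InnerProductSpace ℝ H] [CompleteSpace H]
        (V : Submodule ℝ H) (Nh : Seminorm ℝ V) (a : V →ₗ[ℝ] V →ₗ[ℝ] ℝ),
        (∀ w v : V, a w v = a v w) →
        (∀ w : V, α * Nh w ^ 2 ≤ a w w) →
        (∀ w v : V, |a w v| ≤ β * Nh w * Nh v) →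
        ∀ (h : ℝ), 0 < h →
          ∀ (E : V →ₗ[ℝ] H), (∀ v : V, ‖E v‖ ≤ C₁ * h ^ 2 * Nh v) →
            ∀ (N : ℕ) (hN : 2 ≤ N) (k : ℝ), k = T / N →
              ∀ (g g' : ℝ → H),
                (∀ t ∈ Set.Icc (0 : ℝ) T, HasDerivWithinAt g (g' t) (Set.Icc (0 : ℝ) T) t) →
                ContinuousOn g' (Set.Icc (0 : ℝ) T) →
                ∀ (σ : ℕ → H) (ζ : ℕ → V),
                  (∀ n, 1 ≤ n → n ≤ N - 1 → ∀ v : V,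
                    ⟪(((k ^ 2)⁻¹ • (ζ (n + 1) - (2 : ℝ) • ζ n + ζ (n - 1)) : V) : H),
                        (v : H)⟫
                      + a ((1 / 4 : ℝ) • (ζ (n + 1) + (2 : ℝ) • ζ n + ζ (n - 1))) v
                      = ⟪(1 / 4 : ℝ) • (g (((n : ℝ) + 1) * k) + (2 : ℝ) • g ((n : ℝ) * k)
                            + g (((n : ℝ) - 1) * k)), E v⟫ + ⟪σ n, (v : H)⟫) →
                  ∀ m, 1 ≤ m → m ≤ N - 1 →
                    ‖(k⁻¹ • (ζ (m + 1) - ζ m) : V)‖ ^ 2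
                        + Nh ((1 / 2 : ℝ) • (ζ (m + 1) + ζ m)) ^ 2
                      ≤ C * (‖(k⁻¹ • (ζ 1 - ζ 0) : V)‖ ^ 2
                          + Nh ((1 / 2 : ℝ) • (ζ 1 + ζ 0)) ^ 2
                          + h ^ 4 * ((⨆ s : Set.Icc (0 : ℝ) T, ‖g ↑s‖ ^ 2)
                              + ∫ s in (0 : ℝ)..T, ‖g' s‖ ^ 2)
                          + k * ∑ n ∈ Finset.Icc 1 (N - 1), ‖σ n‖ ^ 2) := by
  refine ⟨(1 + 1 / α) * (2 * (1 + β) + 8 * C₁ ^ 2 / α * (8 + 2 * T) + 8 * T), by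
    have : 0 < β := lt_of_lt_of_le hα hαβ
    positivity, ?_⟩
  intro H _ _ _ V Nh a hsymm hcoer hbdd h hh E hE N hN k hk g g' hg hg' σ ζ heq m hm1 hmN
  have hβ : 0 < β := lt_of_lt_of_le hα hαβ
  obtain ⟨F, S, hS0, hS2, hgS, hgF, hFL⟩ := g_facts T hT g g' hg hg'
  have hNpos : (0:ℝ) < N := by exact_mod_cast (by omega : 0 < N)
  have hkpos : 0 < k := by rw [hk]; positivity
  have hkN : N * k = T := by rw [hk]; field_simp
  rw [← hS2]
  set I := ∫ s in (0 : ℝ)..T, ‖g' s‖ ^ 2 with hI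
  have hI0 : 0 ≤ I := intervalIntegral.integral_nonneg hT.le fun _ _ => sq_nonneg _
  let d : ℕ → V := fun n => k⁻¹ • (ζ (n+1) - ζ n)
  let A : ℕ → V := fun n => (1/2 : ℝ) • (ζ (n+1) + ζ n)
  let G : ℕ → H := fun n => (1 / 4 : ℝ) • (g (((n : ℝ) + 1) * k) + (2 : ℝ) • g ((n : ℝ) * k)
                            + g (((n : ℝ) - 1) * k))
  let Fb : ℕ → ℝ := fun n => (1 / 4 : ℝ) * (F (((n : ℝ) + 1) * k) + 2 * F ((n : ℝ) * k)
                            + F (((n : ℝ) - 1) * k))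
  let Φ : ℕ → ℝ := fun n => ‖d n‖ ^ 2 + a (A n) (A n)
  have haA : ∀ n, α * Nh (A n) ^ 2 ≤ a (A n) (A n) := fun n => hcoer _
  have haA0 : ∀ n, 0 ≤ a (A n) (A n) := fun n => le_trans (by positivity) (haA n)
  have hpt : ∀ x : ℝ, 0 ≤ x → x ≤ N → x * k ∈ Set.Icc (0:ℝ) T := fun x h0 h1 =>
    ⟨by positivity, by rw [← hkN]; exact mul_le_mul_of_nonneg_right h1 hkpos.le⟩
  have hFmono : ∀ s t, 0 ≤ s → s ≤ t → t ≤ T → F s ≤ F t := fun s t h1 h2 h3 => by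
    linarith [hgF s t h1 h2 h3, norm_nonneg (g t - g s)]
  have hL0 : 0 ≤ F T - F 0 := by linarith [hFmono 0 T le_rfl hT.le le_rfl]
  set c := C₁ * h ^ 2 / Real.sqrt α with hc
  have hc0 : 0 ≤ c := by positivity
  have hc2 : c ^ 2 = C₁ ^ 2 * h ^ 4 / α := by
    rw [hc, div_pow, Real.sq_sqrt hα.le]; ring
  have core := core_bound (N-1) Φ (fun n => (d n : H)) (fun n => E (A n)) G σ Fb k S (F T - F 0) c
    hkpos.le hc0 ?_ ?_ ?_ hS0 hL0 ?_ ?_ ?_ m hmN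
  · have e0 : Φ 0 ≤ ‖d 0‖ ^ 2 + β * Nh (A 0) ^ 2 := by
      have := (le_abs_self _).trans (hbdd (A 0) (A 0))
      simp only [Φ]; nlinarith
    have eσ : (k * ∑ n ∈ Finset.Icc 1 (N-1), ‖σ n‖) ^ 2
        ≤ T * (k * ∑ n ∈ Finset.Icc 1 (N-1), ‖σ n‖ ^ 2) := by
      have h1 := sq_sum_le_card_mul_sum_sq (s := Finset.Icc 1 (N-1)) (f := fun n => ‖σ n‖)
      have h2 : ((Finset.Icc 1 (N-1)).card : ℝ) ≤ N := by
        simp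
      have h3 : 0 ≤ ∑ n ∈ Finset.Icc 1 (N-1), ‖σ n‖ ^ 2 := Finset.sum_nonneg fun _ _ => sq_nonneg _
      calc _ = k ^ 2 * (∑ n ∈ Finset.Icc 1 (N-1), ‖σ n‖) ^ 2 := by ring
        _ ≤ k ^ 2 * (N * ∑ n ∈ Finset.Icc 1 (N-1), ‖σ n‖ ^ 2) :=
          mul_le_mul_of_nonneg_left (h1.trans (mul_le_mul_of_nonneg_right h2 h3)) (sq_nonneg _)
        _ = _ := by rw [← hkN]; ring
    have hQ0 : 0 ≤ k * ∑ n ∈ Finset.Icc 1 (N-1), ‖σ n‖ ^ 2 :=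
      mul_nonneg hkpos.le (Finset.sum_nonneg fun _ _ => sq_nonneg _)
    change ‖d m‖ ^ 2 + Nh (A m) ^ 2 ≤ _ * (‖d 0‖ ^ 2 + Nh (A 0) ^ 2 + _ + _)
    generalize (k * ∑ n ∈ Finset.Icc 1 (N-1), ‖σ n‖) = P at *
    generalize (k * ∑ n ∈ Finset.Icc 1 (N-1), ‖σ n‖ ^ 2) = Q at *
    generalize F T - F 0 = L at *
    have hfin : ‖d m‖ ^ 2 + Nh (A m) ^ 2 ≤ (1 + 1 / α) * Φ m := by
      have h1 : Nh (A m) ^ 2 ≤ 1 / α * a (A m) (A m) := by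
        rw [one_div, ← div_eq_inv_mul, le_div_iff₀ hα]; linarith [haA m]
      have h2 : 0 ≤ 1 / α * ‖d m‖ ^ 2 := by positivity
      have h3 := haA0 m
      simp only [Φ]; linarith
    refine hfin.trans ?_
    rw [mul_assoc]
    refine mul_le_mul_of_nonneg_left (core.trans ?_) (by positivity)
    have s1 : (2 * c * (2 * S + L) + 2 * P) ^ 2 ≤ 8 * c ^ 2 * (2 * S + L) ^ 2 + 8 * P ^ 2 := by
      nlinarith [sq_nonneg (2 * c * (2 * S + L) - 2 * P)]
    have s2 : (2 * S + L) ^ 2 ≤ (8 + 2 * T) * (S ^ 2 + I) := by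
      have : 0 ≤ T * S ^ 2 := by positivity
      nlinarith [sq_nonneg (2 * S - L)]
    have s3 : 8 * c ^ 2 * (2 * S + L) ^ 2 ≤ 8 * C₁ ^ 2 / α * (8 + 2 * T) * (h ^ 4 * (S ^ 2 + I)) := by
      calc _ ≤ 8 * c ^ 2 * ((8 + 2 * T) * (S ^ 2 + I)) :=
            mul_le_mul_of_nonneg_left s2 (by positivity)
        _ = _ := by rw [hc2]; ring
    have s4 : 2 * Φ 0 ≤ 2 * (1 + β) * (‖d 0‖ ^ 2 + Nh (A 0) ^ 2) := by
      have : 0 ≤ β * ‖d 0‖ ^ 2 := by positivity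
      have h5 := sq_nonneg (Nh (A 0))
      linarith
    have p1 : 0 ≤ ‖d 0‖ ^ 2 + Nh (A 0) ^ 2 := by positivity
    have p2 : 0 ≤ h ^ 4 * (S ^ 2 + I) := by positivity
    have c2 : 0 ≤ 8 * C₁ ^ 2 / α * (8 + 2 * T) := by positivity
    have c1 : 0 ≤ 2 * (1 + β) := by positivity
    have c3 : 0 ≤ 8 * T := by positivity
    generalize ‖d 0‖ ^ 2 + Nh (A 0) ^ 2 = x at *
    generalize h ^ 4 * (S ^ 2 + I) = y at *
    generalize 8 * C₁ ^ 2 / α * (8 + 2 * T) = u at *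
    generalize 2 * (1 + β) = w at *
    have := mul_nonneg c1 p2
    have := mul_nonneg c1 hQ0
    have := mul_nonneg c2 p1
    have := mul_nonneg c2 hQ0
    have := mul_nonneg c3 p1
    have := mul_nonneg c3 p2
    linarith
  · intro n hn
    have hE1 := heq (n+1) (by omega) hn (ζ (n+1+1) - ζ n)
    rw [Nat.add_sub_cancel] at hE1
    have v1 : ζ (n+1+1) - ζ n = k • (d (n+1) + d n) := by
      simp only [d, ← smul_add, smul_smul, mul_inv_cancel₀ hkpos.ne']; module
    have v2 : ζ (n+1+1) - ζ n = (2:ℝ) • (A (n+1) - A n) := by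
      simp only [A]; module
    have v3 : (k ^ 2)⁻¹ • (ζ (n+1+1) - (2 : ℝ) • ζ (n+1) + ζ n) = k⁻¹ • (d (n+1) - d n) := by
      simp only [d, ← smul_sub, smul_smul]
      rw [pow_two, mul_inv]; module
    have v4 : (1/4:ℝ) • (ζ (n+1+1) + (2 : ℝ) • ζ (n+1) + ζ n) = (1/2:ℝ) • (A (n+1) + A n) := by
      simp only [A]; module
    have t1 : ⟪((k⁻¹ • (d (n+1) - d n) : V) : H), ((k • (d (n+1) + d n) : V) : H)⟫
        = ‖d (n+1)‖ ^ 2 - ‖d n‖ ^ 2 := by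
      simp only [Submodule.coe_smul, Submodule.coe_add, Submodule.coe_sub, inner_smul_left,
        inner_smul_right, inner_add_right, inner_sub_left, real_inner_self_eq_norm_sq,
        Submodule.coe_norm, real_inner_comm (d n : H) (d (n+1) : H)]
      simp
      field_simp
      ring
    have t2 : a ((1/2:ℝ) • (A (n+1) + A n)) ((2:ℝ) • (A (n+1) - A n))
        = a (A (n+1)) (A (n+1)) - a (A n) (A n) := by
      simp only [map_smul, map_add, map_sub, LinearMap.smul_apply, LinearMap.add_apply,
        smul_eq_mul, hsymm (A n) (A (n+1))]
      ring
    have t3 : ⟪G (n+1), E ((2:ℝ) • (A (n+1) - A n))⟫ = 2 * ⟪G (n+1), E (A (n+1)) - E (A n)⟫ := by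
      rw [map_smul, map_sub, inner_smul_right]
    have t4 : ⟪σ (n+1), ((k • (d (n+1) + d n) : V) : H)⟫
        = k * ⟪σ (n+1), (d (n+1) : H) + (d n : H)⟫ := by
      rw [Submodule.coe_smul, Submodule.coe_add, inner_smul_right]
    change _ + _ = ⟪G (n+1), _⟫ + _ at hE1
    rw [v3, v4] at hE1
    rw [← v1] at t1 t4
    rw [← v2] at t2 t3
    rw [t1, t2, t3, t4] at hE1
    simp only [Φ]
    linarith
  · intro n _
    have := haA0 n
    simp only [Φ, Submodule.coe_norm]
    linarith
  · intro n _
    have h1 := haA n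
    have h2 : ‖E (A n)‖ ^ 2 ≤ (C₁ * h ^ 2 * Nh (A n)) ^ 2 :=
      pow_le_pow_left₀ (norm_nonneg _) (hE _) 2
    have h3 : (C₁ * h ^ 2 * Nh (A n)) ^ 2 = c ^ 2 * (α * Nh (A n) ^ 2) := by
      rw [hc2]; field_simp
    have h4 : α * Nh (A n) ^ 2 ≤ Φ n := by
      simp only [Φ]; linarith [sq_nonneg ‖d n‖]
    rw [h3] at h2
    exact h2.trans (mul_le_mul_of_nonneg_left h4 (sq_nonneg c))
  · intro n h1 h2
    have h1' : (1:ℝ) ≤ n := by exact_mod_cast h1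
    have h2' : (n:ℝ) + 1 ≤ N := by exact_mod_cast (by omega : n + 1 ≤ N)
    have a1 := hgS _ (hpt (n+1) (by linarith) h2')
    have a2 := hgS _ (hpt n (by linarith) (by linarith))
    have a3 := hgS _ (hpt (n-1) (by linarith) (by linarith))
    simp only [G]
    rw [norm_smul]
    have := norm_add₃_le (a := g ((n+1)*k)) (b := (2:ℝ) • g (n*k)) (c := g ((n-1)*k))
    rw [norm_smul] at this
    norm_num at this ⊢
    linarith
  · intro n h1 h2
    have h1' : (1:ℝ) ≤ n := by exact_mod_cast h1
    have h2' : (n:ℝ) + 1 + 1 ≤ N := by exact_mod_cast (by omega : n + 1 + 1 ≤ N)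
    have step : ∀ x : ℝ, 0 ≤ x → x + 1 ≤ N → ‖g ((x+1)*k) - g (x*k)‖ ≤ F ((x+1)*k) - F (x*k) :=
      fun x hx hx' => hgF _ _ (by positivity) (by nlinarith) (hpt _ (by linarith) hx').2
    have a1 := step (n+1) (by linarith) h2'
    have a2 := step n (by linarith) (by linarith)
    have a3 := step (n-1) (by linarith) (by linarith)
    rw [sub_add_cancel] at a3
    have e : G (n+1) - G n = (1/4:ℝ) • ((g ((n+1+1)*k) - g ((n+1)*k))
        + (2:ℝ) • (g ((n+1)*k) - g (n*k)) + (g (n*k) - g ((n-1)*k))) := by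
      simp only [G]; push_cast; rw [add_sub_cancel_right]; module
    have e2 : Fb (n+1) - Fb n = (1/4:ℝ) * ((F ((n+1+1)*k) - F ((n+1)*k))
        + 2 * (F ((n+1)*k) - F (n*k)) + (F (n*k) - F ((n-1)*k))) := by
      simp only [Fb]; push_cast; rw [add_sub_cancel_right]; ring
    rw [e, e2, norm_smul]
    have := norm_add₃_le (a := g ((n+1+1)*k) - g ((n+1)*k)) (b := (2:ℝ) • (g ((n+1)*k) - g (n*k)))
      (c := g (n*k) - g ((n-1)*k))
    rw [norm_smul] at this
    rw [Real.norm_of_nonneg (by norm_num : (0:ℝ) ≤ 2)] at this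
    rw [Real.norm_of_nonneg (by norm_num : (0:ℝ) ≤ 1/4)]
    linarith
  · intro n h1 h2
    have h1' : (1:ℝ) ≤ n := by exact_mod_cast h1
    have h2' : (n:ℝ) + 1 ≤ N := by exact_mod_cast (by omega : n + 1 ≤ N)
    have b : ∀ x : ℝ, 0 ≤ x → x ≤ N → F 0 ≤ F (x*k) ∧ F (x*k) ≤ F T := fun x h0 h1 =>
      ⟨hFmono _ _ le_rfl (hpt x h0 h1).1 (hpt x h0 h1).2,
       hFmono _ _ (hpt x h0 h1).1 (hpt x h0 h1).2 le_rfl⟩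
    have a1 := (b (n+1) (by linarith) h2').2
    have a2 := (b n (by linarith) (by linarith)).2
    have a3 := (b (n-1) (by linarith) (by linarith)).2
    have a4 := (b (1+1) (by linarith) (by linarith)).1
    have a5 := (b 1 (by linarith) (by linarith)).1
    have a6 := (b (1-1) (by linarith) (by linarith)).1
    have e1 : Fb 1 = 1 / 4 * (F ((1 + 1) * k) + 2 * F (1 * k) + F ((1 - 1) * k)) := by
      simp only [Fb, Nat.cast_one]
    rw [e1]
    simp only [Fb]
    generalize F ((1 + 1) * k) = x1 at *
    generalize F (1 * k) = x2 at *
    generalize F ((1 - 1) * k) = x3 at *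
    generalize F (((n:ℝ) + 1) * k) = x4 at *
    generalize F ((n:ℝ) * k) = x5 at *
    generalize F (((n:ℝ) - 1) * k) = x6 at *
    linarith
end
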